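/- With q(λ) = √(λ−a)√(λ−b) holomorphic on ℂ\[a,b] and q(λ)/λ → 1 at ∞, and p holomorphic on a neighbourhood U of [a,b], the function h(λ) = q(λ) ∫_a^b (−i p(s)) / (q₊(s)(s−λ)) · ds/(2πi) satisfies the jump relation h₊(λ) + h₋(λ) = −i p(λ) for all λ ∈ (a,b). -/

import Mathlib

open Set Filter Complex MeasureTheory

/-!
Writing `h = q · C f`, where `C` is the Cauchy transform and `f = -i p / q₊` on `(a, b)`, the
Sokhotski–Plemelj formula gives `h₊ / q₊ - h₋ / q₋ = f`, and `q₋ = -q₊` turns the left-hand side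
into `(h₊ + h₋) / q₊`.

The Plemelj formula holds because the difference of the two resolvents `1 / (s - (x ± iε))` is
`2 π i` times the Cauchy density of scale `ε` centred at `x`, an approximate identity. To see that
`q` changes sign across the cut, compare it with `√(z - a) √(b - z)`, which is continuous across
`(a, b)`: by connectedness `q = ±√(z - a) √(z - b)` off `(-∞, b]`, and `√(z - b)` equals
`i √(b - z)` above the real axis but `-i √(b - z)` below it.
-/

section

open scoped Topology

section VerticalApproach

lemma tendsto_add_mul_I (x : ℝ) :
    Tendsto (fun ε : ℝ => (x + ε * I : ℂ)) (𝓝[>] 0) (𝓝 (x : ℂ)) := by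
  have hcont : Continuous fun ε : ℝ => (x + ε * I : ℂ) := by fun_prop
  simpa using (hcont.tendsto 0).mono_left nhdsWithin_le_nhds

lemma tendsto_sub_mul_I (x : ℝ) :
    Tendsto (fun ε : ℝ => (x - ε * I : ℂ)) (𝓝[>] 0) (𝓝 (x : ℂ)) := by
  have hcont : Continuous fun ε : ℝ => (x - ε * I : ℂ) := by fun_prop
  simpa using (hcont.tendsto 0).mono_left nhdsWithin_le_nhds

lemma notMem_image_ofReal_of_im_ne_zero {z : ℂ} (hz : z.im ≠ 0) (S : Set ℝ) :
    z ∉ ofReal '' S := by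
  rintro ⟨x, -, rfl⟩
  exact hz (ofReal_im x)

end VerticalApproach

section CauchyKernel

lemma tendsto_norm_mul_cauchyPDFReal_cobounded :
    Tendsto (fun y : ℝ => ‖y‖ * ProbabilityTheory.cauchyPDFReal 0 1 y)
      (Bornology.cobounded ℝ) (𝓝 0) := by
  have hinv : Tendsto (fun y : ℝ => Real.pi⁻¹ * ‖y‖⁻¹) (Bornology.cobounded ℝ) (𝓝 0) := by
    simpa using (tendsto_norm_cobounded_atTop (E := ℝ)).inv_tendsto_atTop.const_mul Real.pi⁻¹
  refine squeeze_zero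
    (fun y => mul_nonneg (norm_nonneg y) (ProbabilityTheory.cauchyPDF_pos 0 one_ne_zero y).le)
    (fun y => ?_) hinv
  rcases eq_or_ne y 0 with rfl | hy
  · simp
  have : 0 < ‖y‖ := norm_pos_iff.2 hy
  calc ‖y‖ * ProbabilityTheory.cauchyPDFReal 0 1 y
      = Real.pi⁻¹ * (‖y‖ * (‖y‖ ^ 2 + 1)⁻¹) := by
        simp only [ProbabilityTheory.cauchyPDFReal_def, Real.norm_eq_abs, sq_abs, sub_zero,
          NNReal.coe_one, one_pow, mul_one]
        ring
    _ ≤ Real.pi⁻¹ * (‖y‖ * (‖y‖ ^ 2)⁻¹) := by gcongr; linarith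
    _ = Real.pi⁻¹ * ‖y‖⁻¹ := by field_simp

lemma tendsto_integral_cauchyKernel_smul {E : Type*} [NormedAddCommGroup E] [NormedSpace ℝ E]
    [CompleteSpace E] {f : ℝ → E} (hf : Integrable f) {x : ℝ} (hx : ContinuousAt f x) :
    Tendsto (fun ε : ℝ => ∫ s, (Real.pi⁻¹ * ε * ((s - x) ^ 2 + ε ^ 2)⁻¹) • f s)
      (𝓝[>] 0) (𝓝 (f x)) := by
  have hpeak := tendsto_integral_comp_smul_smul_of_integrable' (μ := (volume : Measure ℝ))
    (fun y => (ProbabilityTheory.cauchyPDF_pos 0 one_ne_zero y).le)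
    (ProbabilityTheory.integral_cauchyPDFReal_eq_one 0 one_ne_zero)
    (by simpa using tendsto_norm_mul_cauchyPDFReal_cobounded) hf hx
  refine (hpeak.comp tendsto_inv_nhdsGT_zero).congr' ?_
  filter_upwards [self_mem_nhdsWithin] with ε (hε : 0 < ε)
  refine integral_congr_ae (Eventually.of_forall fun s => ?_)
  simp only [ProbabilityTheory.cauchyPDFReal_def, Module.finrank_self, smul_eq_mul, NNReal.coe_one]
  congr 1
  field_simp
  ring

end CauchyKernel

section CauchyTransform

variable {E : Type*} [NormedAddCommGroup E] [NormedSpace ℂ E] {f : ℝ → E}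

/-- The Cauchy transform `(1 / (2 π i)) ∫ f(s) / (s - z) ds` over the real line; a density living on
an interval is extended by zero. -/
noncomputable def cauchyTransform (f : ℝ → E) (z : ℂ) : E :=
  (2 * Real.pi * I)⁻¹ • ∫ s : ℝ, ((s : ℂ) - z)⁻¹ • f s

lemma cauchyTransform_indicator {S : Set ℝ} (hS : MeasurableSet S) (f : ℝ → E) (z : ℂ) :
    cauchyTransform (S.indicator f) z =
      (2 * Real.pi * I)⁻¹ • ∫ s in S, ((s : ℂ) - z)⁻¹ • f s := by
  rw [cauchyTransform, ← integral_indicator hS]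
  simp only [indicator_smul_apply]

lemma setIntegral_div_mul_sub_eq_cauchyTransform {S : Set ℝ} (hS : MeasurableSet S)
    (u v : ℝ → ℂ) (z : ℂ) :
    ∫ s in S, u s / (v s * ((s : ℂ) - z)) / (2 * Real.pi * I) =
      cauchyTransform (S.indicator fun s => u s / v s) z := by
  rw [cauchyTransform_indicator hS, smul_eq_mul, integral_div, div_eq_inv_mul]
  congr! 3
  rw [smul_eq_mul, div_mul_eq_div_div, inv_mul_eq_div]

lemma integrable_inv_sub_smul (hf : Integrable f) {z : ℂ} (hz : z.im ≠ 0) :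
    Integrable fun s : ℝ => ((s : ℂ) - z)⁻¹ • f s := by
  have hbound : ∀ s : ℝ, |z.im| ≤ ‖(s : ℂ) - z‖ := fun s => by
    simpa using abs_im_le_norm ((s : ℂ) - z)
  have hpos : 0 < |z.im| := abs_pos.2 hz
  refine hf.bdd_smul (C := |z.im|⁻¹) ?_ (Eventually.of_forall fun s => ?_)
  · exact (Continuous.inv₀ (by fun_prop) fun s =>
      norm_pos_iff.1 (hpos.trans_le (hbound s))).aestronglyMeasurable
  · rw [norm_inv]
    exact inv_anti₀ hpos (hbound s)

lemma inv_sub_add_mul_I_sub_inv_sub_sub_mul_I (s x : ℝ) {ε : ℝ} (hε : ε ≠ 0) :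
    ((s : ℂ) - (x + ε * I))⁻¹ - ((s : ℂ) - (x - ε * I))⁻¹ =
      2 * Real.pi * I * (Real.pi⁻¹ * ε * ((s - x) ^ 2 + ε ^ 2)⁻¹ : ℝ) := by
  have hne_add : (s : ℂ) - (x + ε * I) ≠ 0 := fun h => hε (by simpa using congrArg im h)
  have hne_sub : (s : ℂ) - (x - ε * I) ≠ 0 := fun h => hε (by simpa using congrArg im h)
  have hprod : ((s : ℂ) - (x + ε * I)) * ((s : ℂ) - (x - ε * I)) = (s - x) ^ 2 + ε ^ 2 := by
    linear_combination (-(ε : ℂ) ^ 2) * I_sq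
  have hpi : (Real.pi : ℂ) ≠ 0 := ofReal_ne_zero.2 Real.pi_ne_zero
  rw [inv_sub_inv hne_add hne_sub, hprod, div_eq_mul_inv]
  push_cast
  rw [show (s : ℂ) - (x - ε * I) - (s - (x + ε * I)) = 2 * I * ε by ring]
  field_simp

lemma cauchyTransform_add_mul_I_sub_cauchyTransform_sub_mul_I (hf : Integrable f) (x : ℝ)
    {ε : ℝ} (hε : ε ≠ 0) :
    cauchyTransform f (x + ε * I) - cauchyTransform f (x - ε * I) =
      ∫ s, (Real.pi⁻¹ * ε * ((s - x) ^ 2 + ε ^ 2)⁻¹) • f s := by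
  have hc : (2 * Real.pi * I : ℂ) ≠ 0 := two_pi_I_ne_zero
  rw [cauchyTransform, cauchyTransform, ← smul_sub, ← integral_sub
    (integrable_inv_sub_smul hf (by simpa using hε))
    (integrable_inv_sub_smul hf (by simpa using hε)), ← integral_smul]
  refine integral_congr_ae (Eventually.of_forall fun s => ?_)
  simp only
  rw [← sub_smul, inv_sub_add_mul_I_sub_inv_sub_sub_mul_I s x hε, smul_smul,
    inv_mul_cancel_left₀ hc, coe_smul]

lemma tendsto_cauchyTransform_sub_cauchyTransform [CompleteSpace E] (hf : Integrable f) {x : ℝ}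
    (hx : ContinuousAt f x) :
    Tendsto (fun ε : ℝ => cauchyTransform f (x + ε * I) - cauchyTransform f (x - ε * I))
      (𝓝[>] 0) (𝓝 (f x)) := by
  refine (tendsto_integral_cauchyKernel_smul hf hx).congr' ?_
  filter_upwards [self_mem_nhdsWithin] with ε (hε : 0 < ε)
  exact (cauchyTransform_add_mul_I_sub_cauchyTransform_sub_mul_I hf x hε.ne').symm

theorem inv_smul_sub_inv_smul_eq_of_eq_smul_cauchyTransform [CompleteSpace E] (hf : Integrable f)
    {x : ℝ} (hx : ContinuousAt f x) {q : ℂ → ℂ} {h : ℂ → E}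
    (hh : ∀ z : ℂ, z.im ≠ 0 → h z = q z • cauchyTransform f z)
    {qplus qminus : ℂ} (hqplus0 : qplus ≠ 0) (hqminus0 : qminus ≠ 0)
    (hqplus : Tendsto (fun ε : ℝ => q (x + ε * I)) (𝓝[>] 0) (𝓝 qplus))
    (hqminus : Tendsto (fun ε : ℝ => q (x - ε * I)) (𝓝[>] 0) (𝓝 qminus))
    {hplus hminus : E}
    (hhplus : Tendsto (fun ε : ℝ => h (x + ε * I)) (𝓝[>] 0) (𝓝 hplus))
    (hhminus : Tendsto (fun ε : ℝ => h (x - ε * I)) (𝓝[>] 0) (𝓝 hminus)) :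
    qplus⁻¹ • hplus - qminus⁻¹ • hminus = f x := by
  refine tendsto_nhds_unique ?_ (tendsto_cauchyTransform_sub_cauchyTransform hf hx)
  refine (((hqplus.inv₀ hqplus0).smul hhplus).sub
    ((hqminus.inv₀ hqminus0).smul hhminus)).congr' ?_
  filter_upwards [self_mem_nhdsWithin, hqplus.eventually_ne hqplus0,
    hqminus.eventually_ne hqminus0] with ε (hε : 0 < ε) hne_plus hne_minus
  rw [hh _ (by simpa using hε.ne'), hh _ (by simpa using hε.ne'), inv_smul_smul₀ hne_plus,
    inv_smul_smul₀ hne_minus]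

end CauchyTransform

section SquareRoot

lemma complexSqrt_sq (z : ℂ) : z.sqrt ^ 2 = z := by
  simp [Complex.sqrt]

lemma complexSqrt_ne_zero {z : ℂ} (hz : z ≠ 0) : z.sqrt ≠ 0 := fun h =>
  hz (by rw [← complexSqrt_sq z, h, zero_pow two_ne_zero])

lemma complexSqrt_eq_I_mul_sqrt_neg_of_im_pos {z : ℂ} (hz : 0 < z.im) :
    z.sqrt = I * (-z).sqrt := by
  rw [sqrt_eq_real_add_ite, sqrt_eq_real_add_ite, if_pos hz.le, if_neg (by simpa using hz)]
  simp only [norm_neg, neg_re, sub_neg_eq_add, ← sub_eq_add_neg]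
  linear_combination (√((‖z‖ + z.re) / 2) : ℂ) * I_sq

lemma complexSqrt_eq_neg_I_mul_sqrt_neg_of_im_neg {z : ℂ} (hz : z.im < 0) :
    z.sqrt = -I * (-z).sqrt := by
  have hneg : (-z).sqrt = I * z.sqrt := by
    simpa using complexSqrt_eq_I_mul_sqrt_neg_of_im_pos (z := -z) (by simpa using hz)
  rw [hneg]
  linear_combination z.sqrt * I_sq

lemma complexSqrt_ofReal {x : ℝ} (hx : 0 ≤ x) : (x : ℂ).sqrt = √x := by
  simpa using sqrt_of_nonneg (a := (x : ℂ)) (by exact_mod_cast hx)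

lemma isPreconnected_setOf_sub_mem_slitPlane (w : ℂ) :
    IsPreconnected {z : ℂ | z - w ∈ slitPlane} :=
  (Homeomorph.subRight w).isPreconnected_preimage.2
    (starConvex_one_slitPlane.isPathConnected one_mem_slitPlane).isConnected.isPreconnected

variable {a b : ℝ}

/-- The branch `√(z - a) √(b - z)` of `√((z - a)(b - z))`, whose cuts lie on the real axis outside
`(a, b)`, so that it is continuous across `(a, b)`. -/
noncomputable def outerCutSqrt (a b : ℝ) (z : ℂ) : ℂ :=
  (z - a).sqrt * (b - z).sqrt

lemma outerCutSqrt_ofReal {s : ℝ} (hs : s ∈ Icc a b) :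
    outerCutSqrt a b s = √((s - a) * (b - s)) := by
  rw [outerCutSqrt, ← ofReal_sub, ← ofReal_sub, complexSqrt_ofReal (sub_nonneg.2 hs.1),
    complexSqrt_ofReal (sub_nonneg.2 hs.2), Real.sqrt_mul (sub_nonneg.2 hs.1), ofReal_mul]

lemma continuousAt_outerCutSqrt {s : ℝ} (hs : s ∈ Icc a b) :
    ContinuousAt (outerCutSqrt a b) s := by
  have hleft : ContinuousAt Complex.sqrt (s - a) :=
    continuousAt_sqrt (Or.inl (by simpa using hs.1))
  have hright : ContinuousAt Complex.sqrt (b - s) :=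
    continuousAt_sqrt (Or.inl (by simpa using hs.2))
  exact (hleft.comp (f := fun z : ℂ => z - a) (by fun_prop)).mul
    (hright.comp (f := fun z : ℂ => b - z) (by fun_prop))

lemma integrableOn_inv_sqrt_sub_mul_sub :
    IntegrableOn (fun s : ℝ => (√((s - a) * (b - s)))⁻¹) (Ioo a b) := by
  rcases le_or_gt b a with hba | hab
  · simp [Ioo_eq_empty hba.not_gt]
  set r : ℝ := (b - a) / 2 with hr
  have hr0 : 0 < r := by linarith
  have hint : IntervalIntegrable
      (fun s => √(1 - (r⁻¹ * (s - (a + b) / 2)) ^ 2)⁻¹) volume a b := by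
    have := (Polynomial.Chebyshev.intervalIntegrable_sqrt_one_sub_sq_inv.comp_mul_left
      (c := r⁻¹)).comp_sub_right ((a + b) / 2)
    convert this using 1 <;> simp only [div_inv_eq_mul] <;> linarith
  have hint' := ((intervalIntegrable_iff_integrableOn_Ioo_of_le hab.le).1 hint).const_mul r⁻¹
  refine hint'.congr (Eventually.of_forall fun s => ?_)
  have hsq : (s - a) * (b - s) = r ^ 2 * (1 - (r⁻¹ * (s - (a + b) / 2)) ^ 2) := by
    field_simp
    rw [hr]
    ring
  simp only
  rw [hsq, Real.sqrt_mul (sq_nonneg r), Real.sqrt_sq hr0.le, Real.sqrt_inv, mul_inv]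

section BoundaryValues

variable {q : ℂ → ℂ} {qplus : ℝ → ℂ}

lemma exists_eqOn_mul_sqrt_sub_mul_sqrt_sub (hab : a ≤ b)
    (hq : ContinuousOn q (ofReal '' Icc a b)ᶜ)
    (hq2 : ∀ z ∈ (ofReal '' Icc a b)ᶜ, q z ^ 2 = (z - a) * (z - b)) :
    ∃ σ : ℂ, σ ≠ 0 ∧
      EqOn q (fun z => σ * ((z - a).sqrt * (z - b).sqrt)) {z | z - b ∈ slitPlane} := by
  have hsub : {z : ℂ | z - b ∈ slitPlane} ⊆ (ofReal '' Icc a b)ᶜ := by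
    rintro _ hz ⟨x, hx, rfl⟩
    rw [mem_ofPred_eq, ← ofReal_sub, ofReal_mem_slitPlane] at hz
    linarith [hx.2]
  have hslit : ∀ z : ℂ, z - b ∈ slitPlane → z - a ∈ slitPlane := fun z hz => by
    simp only [mem_slitPlane_iff, sub_re, sub_im, ofReal_re, ofReal_im] at hz ⊢
    exact hz.imp_left fun h => by linarith
  have hcont : ContinuousOn (fun z : ℂ => (z - a).sqrt * (z - b).sqrt)
      {z | z - b ∈ slitPlane} :=
    (continuousOn_sqrt.comp (by fun_prop) hslit).mul
      (continuousOn_sqrt.comp (by fun_prop) fun _ hz => hz)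
  have hne : ∀ {z : ℂ}, z - b ∈ slitPlane → (z - a).sqrt * (z - b).sqrt ≠ 0 := fun hz =>
    mul_ne_zero (complexSqrt_ne_zero (slitPlane_ne_zero (hslit _ hz)))
      (complexSqrt_ne_zero (slitPlane_ne_zero hz))
  have hsq : EqOn (q ^ 2) ((fun z : ℂ => (z - a).sqrt * (z - b).sqrt) ^ 2)
      {z : ℂ | z - b ∈ slitPlane} := fun z hz => by
    simp only [Pi.pow_apply, mul_pow, complexSqrt_sq, hq2 z (hsub hz)]
  rcases (isPreconnected_setOf_sub_mem_slitPlane b).eq_or_eq_neg_of_sq_eq (hq.mono hsub) hcont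
    hsq hne with hpos | hneg
  · exact ⟨1, one_ne_zero, fun z hz => by simpa using hpos hz⟩
  · exact ⟨-1, neg_ne_zero.2 one_ne_zero, fun z hz => by simpa using hneg hz⟩

lemma exists_eq_mul_outerCutSqrt (hab : a ≤ b) (hq : ContinuousOn q (ofReal '' Icc a b)ᶜ)
    (hq2 : ∀ z ∈ (ofReal '' Icc a b)ᶜ, q z ^ 2 = (z - a) * (z - b)) :
    ∃ c : ℂ, c ≠ 0 ∧ (∀ z : ℂ, 0 < z.im → q z = c * outerCutSqrt a b z) ∧
      ∀ z : ℂ, z.im < 0 → q z = -(c * outerCutSqrt a b z) := by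
  obtain ⟨σ, hσ, hqσ⟩ := exists_eqOn_mul_sqrt_sub_mul_sqrt_sub hab hq hq2
  have hmem : ∀ z : ℂ, z.im ≠ 0 → z - b ∈ slitPlane := fun z hz => Or.inr (by simpa using hz)
  refine ⟨σ * I, mul_ne_zero hσ I_ne_zero, fun z hz => ?_, fun z hz => ?_⟩
  · have hsqrt : (z - b).sqrt = I * (b - z).sqrt := by
      simpa using complexSqrt_eq_I_mul_sqrt_neg_of_im_pos (z := z - b) (by simpa using hz)
    simp only [hqσ (hmem z hz.ne'), hsqrt, outerCutSqrt]
    ring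
  · have hsqrt : (z - b).sqrt = -I * (b - z).sqrt := by
      simpa using complexSqrt_eq_neg_I_mul_sqrt_neg_of_im_neg (z := z - b) (by simpa using hz)
    simp only [hqσ (hmem z hz.ne), hsqrt, outerCutSqrt]
    ring

lemma exists_tendsto_mul_sqrt (hab : a ≤ b) (hq : ContinuousOn q (ofReal '' Icc a b)ᶜ)
    (hq2 : ∀ z ∈ (ofReal '' Icc a b)ᶜ, q z ^ 2 = (z - a) * (z - b)) :
    ∃ c : ℂ, c ≠ 0 ∧ ∀ s ∈ Icc a b,
      Tendsto (fun ε : ℝ => q (s + ε * I)) (𝓝[>] 0) (𝓝 (c * √((s - a) * (b - s)))) ∧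
      Tendsto (fun ε : ℝ => q (s - ε * I)) (𝓝[>] 0) (𝓝 (-(c * √((s - a) * (b - s))))) := by
  obtain ⟨c, hc0, hupper, hlower⟩ := exists_eq_mul_outerCutSqrt hab hq hq2
  refine ⟨c, hc0, fun s hs => ?_⟩
  have hcont : Tendsto (outerCutSqrt a b) (𝓝 s) (𝓝 (√((s - a) * (b - s)) : ℂ)) :=
    outerCutSqrt_ofReal hs ▸ continuousAt_outerCutSqrt hs
  constructor
  · refine ((hcont.comp (tendsto_add_mul_I s)).const_mul c).congr' ?_
    filter_upwards [self_mem_nhdsWithin] with ε (hε : 0 < ε)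
    exact (hupper _ (by simpa using hε)).symm
  · refine ((hcont.comp (tendsto_sub_mul_I s)).const_mul c).neg.congr' ?_
    filter_upwards [self_mem_nhdsWithin] with ε (hε : 0 < ε)
    exact (hlower _ (by simpa using hε)).symm

lemma exists_eq_mul_sqrt_of_tendsto (hab : a ≤ b) (hq : ContinuousOn q (ofReal '' Icc a b)ᶜ)
    (hq2 : ∀ z ∈ (ofReal '' Icc a b)ᶜ, q z ^ 2 = (z - a) * (z - b))
    (hqplus : ∀ s ∈ Ioo a b,
      Tendsto (fun ε : ℝ => q (s + ε * I)) (𝓝[>] 0) (𝓝 (qplus s))) :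
    ∃ c : ℂ, c ≠ 0 ∧ EqOn qplus (fun s => c * √((s - a) * (b - s))) (Ioo a b) ∧
      ∀ s ∈ Ioo a b, Tendsto (fun ε : ℝ => q (s - ε * I)) (𝓝[>] 0) (𝓝 (-qplus s)) := by
  obtain ⟨c, hc0, hlim⟩ := exists_tendsto_mul_sqrt hab hq hq2
  have heq : EqOn qplus (fun s => c * √((s - a) * (b - s))) (Ioo a b) := fun s hs =>
    tendsto_nhds_unique (hqplus s hs) (hlim s (Ioo_subset_Icc_self hs)).1
  exact ⟨c, hc0, heq, fun s hs => heq hs ▸ (hlim s (Ioo_subset_Icc_self hs)).2⟩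

lemma integrableOn_div_of_eqOn_mul_sqrt {p : ℝ → ℂ} (hp : ContinuousOn p (Icc a b)) {c : ℂ}
    (hqplus : EqOn qplus (fun s => c * √((s - a) * (b - s))) (Ioo a b)) :
    IntegrableOn (fun s => p s / qplus s) (Ioo a b) := by
  obtain ⟨M, hM⟩ := isCompact_Icc.exists_bound_of_continuousOn hp
  have hweight : IntegrableOn (fun s : ℝ => c⁻¹ * ((√((s - a) * (b - s)))⁻¹ : ℝ)) (Ioo a b) :=
    integrableOn_inv_sqrt_sub_mul_sub.ofReal.const_mul c⁻¹
  have hprod := hweight.bdd_mul (c := M)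
    ((hp.mono Ioo_subset_Icc_self).aestronglyMeasurable measurableSet_Ioo)
    (ae_restrict_of_forall_mem measurableSet_Ioo fun s hs => hM s (Ioo_subset_Icc_self hs))
  refine hprod.congr (ae_restrict_of_forall_mem measurableSet_Ioo fun s hs => ?_)
  simp only [hqplus hs, div_eq_mul_inv, mul_inv, ofReal_inv]

end BoundaryValues

end SquareRoot

theorem h_function_jump_relation_general {a b : ℝ} {p : ℝ → ℂ} {q : ℂ → ℂ}
    (hq : ContinuousOn q (ofReal '' Icc a b)ᶜ)
    (hq2 : ∀ z ∈ (ofReal '' Icc a b)ᶜ, q z ^ 2 = (z - a) * (z - b)) {qplus : ℝ → ℂ}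
    (hqplus : ∀ s ∈ Ioo a b,
      Tendsto (fun ε : ℝ => q (s + ε * I)) (𝓝[>] 0) (𝓝 (qplus s)))
    (hpint : IntegrableOn (fun s => p s / qplus s) (Ioo a b)) {h : ℂ → ℂ}
    (hdef : ∀ z ∈ (ofReal '' Icc a b)ᶜ, h z = q z *
      ∫ s in Ioo a b, (-I * p s) / (qplus s * ((s : ℂ) - z)) / (2 * Real.pi * I))
    {lam : ℝ} (hlam : lam ∈ Ioo a b) (hp : ContinuousAt p lam) {hplus hminus : ℂ}
    (hhp : Tendsto (fun ε : ℝ => h (lam + ε * I)) (𝓝[>] 0) (𝓝 hplus))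
    (hhm : Tendsto (fun ε : ℝ => h (lam - ε * I)) (𝓝[>] 0) (𝓝 hminus)) :
    hplus + hminus = -I * p lam := by
  obtain ⟨c, hc0, hqplus_eq, hqminus⟩ :=
    exists_eq_mul_sqrt_of_tendsto (hlam.1.trans hlam.2).le hq hq2 hqplus
  have hqplus0 : qplus lam ≠ 0 := by
    rw [hqplus_eq hlam]
    exact mul_ne_zero hc0 (ofReal_ne_zero.2
      (Real.sqrt_pos.2 (mul_pos (sub_pos.2 hlam.1) (sub_pos.2 hlam.2))).ne')
  have hnhds : Ioo a b ∈ 𝓝 lam := isOpen_Ioo.mem_nhds hlam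
  have hqplus_cont : ContinuousAt qplus lam :=
    ContinuousAt.congr (by fun_prop) (hqplus_eq.symm.eventuallyEq_of_mem hnhds)
  have hint : Integrable ((Ioo a b).indicator fun s => -I * p s / qplus s) := by
    simpa only [mul_div_assoc] using
      (integrable_indicator_iff measurableSet_Ioo).2 (hpint.const_mul (-I))
  have hcont : ContinuousAt ((Ioo a b).indicator fun s => -I * p s / qplus s) lam :=
    ((hp.const_mul (-I)).div hqplus_cont hqplus0).congr
      (eqOn_indicator.symm.eventuallyEq_of_mem hnhds)
  have hh : ∀ z : ℂ, z.im ≠ 0 →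
      h z = q z • cauchyTransform ((Ioo a b).indicator fun s => -I * p s / qplus s) z :=
    fun z hz => by
      rw [hdef z (notMem_image_ofReal_of_im_ne_zero hz _),
        setIntegral_div_mul_sub_eq_cauchyTransform measurableSet_Ioo, smul_eq_mul]
  have hjump := inv_smul_sub_inv_smul_eq_of_eq_smul_cauchyTransform hint hcont hh hqplus0
    (neg_ne_zero.2 hqplus0) (hqplus lam hlam) (hqminus lam hlam) hhp hhm
  rw [indicator_of_mem hlam, smul_eq_mul, smul_eq_mul] at hjump
  field_simp at hjump
  linear_combination hjump

end

theorem h_function_jump_relation (a b : ℝ) (hab : a < b)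
    (U : Set ℂ) (hU : IsOpen U) (hUab : (fun x : ℝ => (x : ℂ)) '' Icc a b ⊆ U)
    (p : ℂ → ℂ) (hp : DifferentiableOn ℂ p U)
    (q : ℂ → ℂ)
    (hq : DifferentiableOn ℂ q ((fun x : ℝ => (x : ℂ)) '' Icc a b)ᶜ)
    (hq2 : ∀ z ∈ ((fun x : ℝ => (x : ℂ)) '' Icc a b)ᶜ, q z ^ 2 = (z - a) * (z - b))
    (hqnorm : Tendsto (fun x : ℝ => q x / x) atTop (nhds 1))
    (qplus : ℝ → ℂ)
    (hqplus : ∀ s ∈ Ioo a b,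
      Tendsto (fun ε : ℝ => q (s + ε * Complex.I)) (nhdsWithin 0 (Ioi 0)) (nhds (qplus s)))
    (h : ℂ → ℂ)
    (hdef : ∀ z ∈ ((fun x : ℝ => (x : ℂ)) '' Icc a b)ᶜ,
      h z = q z * ∫ s in Ioo a b,
        (-Complex.I * p (s : ℂ)) / (qplus s * ((s : ℂ) - z)) / (2 * Real.pi * Complex.I))
    (lam : ℝ) (hlam : lam ∈ Ioo a b) (hplus hminus : ℂ)
    (hhp : Tendsto (fun ε : ℝ => h (lam + ε * Complex.I))
      (nhdsWithin 0 (Ioi 0)) (nhds hplus))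
    (hhm : Tendsto (fun ε : ℝ => h (lam - ε * Complex.I))
      (nhdsWithin 0 (Ioi 0)) (nhds hminus)) :
    hplus + hminus = -Complex.I * p (lam : ℂ) := by
  have hpc : ContinuousOn (fun s : ℝ => p s) (Icc a b) :=
    hp.continuousOn.comp (by fun_prop) fun s hs => hUab ⟨s, hs, rfl⟩
  obtain ⟨c, -, hqplus_eq, -⟩ := exists_eq_mul_sqrt_of_tendsto hab.le hq.continuousOn hq2 hqplus
  exact h_function_jump_relation_general hq.continuousOn hq2 hqplus
    (integrableOn_div_of_eqOn_mul_sqrt hpc hqplus_eq) hdef hlam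
    (hpc.continuousAt (Icc_mem_nhds hlam.1 hlam.2)) hhp hhm
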